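/- Let P^{(1)},…,P^{(n)} be drawn i.i.d. from a meta-distribution μ, and from each P^{(j)} draw an i.i.d. sample of m points, all samples mutually independent. Then with confidence at least 1 − 2δ, simultaneously for all f ∈ F: L^μ(f) ≤ L̂^μ(f) + 2·R_{mn}(F) + 2·R_n(F) + 3·√(ln(2/δ)/(2mn)) + 3·√(ln(2/δ)/n). -/

import Mathlib

open MeasureTheory Real Filter

noncomputable section

/-- The output space `Y = {1, -1}`, as a subtype of the integers. -/
abbrev Ysp : Type := ({1, -1} : Set ℤ)

/-- The risk `L_P(f) = E_{(x,y) ~ P}[ℓ(f(x), y)]` of a decision function `f`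
under a distribution `P` on `X × Y`. -/
def risk {X : Type*} [MeasurableSpace X] (ℓ : Ysp → Ysp → ℝ)
    (P : Measure (X × Ysp)) (f : X → Ysp) : ℝ :=
  ∫ p, ℓ (f p.1) p.2 ∂P

/-- The population risk `L^μ(f) = E_{P ~ μ}[L_P(f)]` under a meta-distribution `μ`. -/
def metaRisk {X : Type*} [MeasurableSpace X] (ℓ : Ysp → Ysp → ℝ)
    (μ : Measure (Measure (X × Ysp))) (f : X → Ysp) : ℝ :=
  ∫ P, risk ℓ P f ∂μ

/-- Interpret a boolean as a random sign in `{-1, +1}`. -/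
def sgn (b : Bool) : ℝ := if b then 1 else -1

/-- Empirical Rademacher complexity of the class `F` on the sample `S`:
the expectation, over i.i.d. uniform random signs `σ`, of
`sup_{f ∈ F} (1/N) ∑ₖ σₖ ℓ(f(xₖ), yₖ)` where `N` is the sample size. -/
def rad {X : Type*} [MeasurableSpace X] (ℓ : Ysp → Ysp → ℝ) (F : Set (X → Ysp))
    {ι : Type*} [Fintype ι] [DecidableEq ι] (S : ι → X × Ysp) : ℝ :=
  (∑ σ : ι → Bool, ⨆ f ∈ F,
      (Fintype.card ι : ℝ)⁻¹ * ∑ k, sgn (σ k) * ℓ (f (S k).1) (S k).2) /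
    2 ^ Fintype.card ι

/-- Domain-level Rademacher average of `F` on the domains `P 0, …, P (n-1)`:
the expectation, over i.i.d. uniform random signs `σ`, of
`sup_{f ∈ F} (1/n) ∑ⱼ σⱼ L_{P⁽ʲ⁾}(f)`. -/
def radDom {X : Type*} [MeasurableSpace X] (ℓ : Ysp → Ysp → ℝ) (F : Set (X → Ysp))
    {n : ℕ} (P : Fin n → Measure (X × Ysp)) : ℝ :=
  (∑ σ : Fin n → Bool, ⨆ f ∈ F,
      (n : ℝ)⁻¹ * ∑ j, sgn (σ j) * risk ℓ (P j) f) / 2 ^ n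

/-- The joint law of (the tuple of `n` i.i.d. domains drawn from a meta-distribution `μ`,
an `n × m` array of samples whose `j`-th row consists of `m` i.i.d. samples from
the `j`-th drawn domain). -/
def jointLaw {X : Type*} [MeasurableSpace X] (n m : ℕ)
    (μ : Measure (Measure (X × Ysp))) :
    Measure ((Fin n → Measure (X × Ysp)) × ((Fin n × Fin m) → X × Ysp)) :=
  (Measure.pi fun _ : Fin n => μ).bind fun P =>
    (Measure.pi fun p : Fin n × Fin m => P p.1).map fun s => (P, s)


open ProbabilityTheory in
/-- McDiarmid's inequality, mgf form, on `Fin n`. -/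
lemma mcd_mgf_fin {Z : Type*} [MeasurableSpace Z] (c : ℝ) (hc : 0 ≤ c) (B t : ℝ) :
    ∀ (n : ℕ) (ν : Fin n → Measure Z) [∀ i, IsProbabilityMeasure (ν i)]
      (f : (Fin n → Z) → ℝ), Measurable f → (∀ x, |f x| ≤ B) →
      (∀ x y k, (∀ j, j ≠ k → x j = y j) → f x - f y ≤ c) →
      ∫ x, exp (t * (f x - ∫ y, f y ∂(Measure.pi ν))) ∂(Measure.pi ν)
        ≤ exp (n * (c / 2) ^ 2 * t ^ 2 / 2) := by
  intro n
  induction n with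
  | zero =>
    intro ν _ f hf hB hd
    have h : ∀ x, f x = f default := fun x => by congr 1; exact Subsingleton.elim _ _
    simp [h]
  | succ n ih =>
    intro ν _ f hf hB hd
    have hmp := (measurePreserving_piFinSuccAbove ν 0).symm
    set e := (MeasurableEquiv.piFinSuccAbove (fun _ : Fin (n+1) => Z) 0).symm with he
    set π' := Measure.pi (fun j => ν (Fin.succAbove 0 j)) with hπ'
    have hFm : Measurable fun p : Z × (Fin n → Z) => f (e p) := hf.comp e.measurable
    set m := ∫ y, f y ∂(Measure.pi ν) with hm
    have hFi : Integrable (fun p : Z × (Fin n → Z) => f (e p)) ((ν 0).prod π') :=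
      Integrable.of_bound hFm.aestronglyMeasurable B (Eventually.of_forall fun p => hB _)
    have hmp_m : m = ∫ x, ∫ a, f (e (a, x)) ∂(ν 0) ∂π' := by
      rw [hm, ← hmp.integral_comp', integral_prod_symm _ hFi]
    set g : (Fin n → Z) → ℝ := fun x => ∫ a, f (e (a, x)) ∂(ν 0) with hg
    have hgm : Measurable g := by
      have : StronglyMeasurable g :=
        StronglyMeasurable.integral_prod_left' (f := fun p : Z × (Fin n → Z) => f (e p)) hFm.stronglyMeasurable
      exact this.measurable
    have hsec : ∀ x, Integrable (fun a => f (e (a, x))) (ν 0) := fun x =>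
      Integrable.of_bound (hFm.comp measurable_prodMk_right).aestronglyMeasurable B
        (Eventually.of_forall fun p => hB _)
    have hgB : ∀ x, |g x| ≤ B := fun x => by
      have := norm_integral_le_of_norm_le_const (μ := ν 0) (f := fun a => f (e (a, x))) (C := B)
        (Eventually.of_forall fun p => hB _)
      simpa using this
    have he0 : ∀ a x, e (a, x) 0 = a := fun a x => by simp [he, MeasurableEquiv.piFinSuccAbove]
    have hes : ∀ a x (j : Fin n), e (a, x) j.succ = x j := fun a x j => by
      simp [he, MeasurableEquiv.piFinSuccAbove]
    have hgd : ∀ x y k, (∀ j, j ≠ k → x j = y j) → g x - g y ≤ c := by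
      intro x y k hxy
      rw [hg]
      simp only
      rw [← integral_sub (hsec x) (hsec y)]
      have : ∫ a, (f (e (a, x)) - f (e (a, y))) ∂(ν 0) ≤ ∫ a, c ∂(ν 0) := by
        refine integral_mono ((hsec x).sub (hsec y)) (integrable_const _) fun a => ?_
        refine hd _ _ k.succ fun j => ?_
        refine Fin.cases ?_ (fun j hj => ?_) j
        · intro _; rw [he0, he0]
        · rw [hes, hes]; exact hxy j (fun h => hj (by rw [h]))
      simpa using this
    have hih := ih (fun j => ν (Fin.succAbove 0 j)) g hgm hgB hgd
    have hexpm : Measurable fun p : Z × (Fin n → Z) => exp (t * (f (e p) - m)) :=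
      ((hFm.sub_const m).const_mul t).exp
    have hmB : |m| ≤ B := by
      have := norm_integral_le_of_norm_le_const (μ := Measure.pi ν) (f := f) (C := B)
        (Eventually.of_forall fun p => hB _)
      simpa using this
    have hexpB : ∀ u : ℝ, |u| ≤ B → ‖exp (t * (u - m))‖ ≤ exp (|t| * (2 * B)) := by
      intro u hu
      rw [Real.norm_eq_abs, abs_exp]
      apply exp_le_exp.2
      calc t * (u - m) ≤ |t * (u - m)| := le_abs_self _
        _ = |t| * |u - m| := abs_mul _ _
        _ ≤ |t| * (2 * B) := by
          gcongr
          exact (abs_sub _ _).trans (by linarith)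
    have hexpi : Integrable (fun p : Z × (Fin n → Z) => exp (t * (f (e p) - m))) ((ν 0).prod π') :=
      Integrable.of_bound hexpm.aestronglyMeasurable _ (Eventually.of_forall fun p => hexpB _ (hB _))
    have h1 : ∫ x, exp (t * (f x - m)) ∂(Measure.pi ν)
        = ∫ x, ∫ a, exp (t * (f (e (a, x)) - m)) ∂(ν 0) ∂π' := by
      rw [← hmp.integral_comp' (g := fun x => exp (t * (f x - m))), integral_prod_symm _ hexpi]
    have hkey : ∀ x, ∫ a, exp (t * (f (e (a, x)) - m)) ∂(ν 0)
        ≤ exp (t * (g x - m)) * exp ((c / 2) ^ 2 * t ^ 2 / 2) := by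
      intro x
      have hne : Nonempty Z := nonempty_of_isProbabilityMeasure (ν 0)
      have hbdd : BddBelow (Set.range fun a => f (e (a, x))) :=
        ⟨-B, by rintro _ ⟨a, rfl⟩; exact (abs_le.1 (hB _)).1⟩
      have hmem : ∀ a, f (e (a, x)) ∈ Set.Icc (⨅ a, f (e (a, x))) ((⨅ a, f (e (a, x))) + c) := by
        intro a
        refine ⟨ciInf_le hbdd a, ?_⟩
        rw [← sub_le_iff_le_add]
        refine le_ciInf fun b => ?_
        have := hd (e (a, x)) (e (b, x)) 0 (fun j => by
          refine Fin.cases ?_ (fun j hj => ?_) j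
          · intro h; exact absurd rfl h
          · rw [hes, hes])
        linarith
      have hh := (hasSubgaussianMGF_of_mem_Icc (μ := ν 0)
        (hFm.comp measurable_prodMk_right).aemeasurable
        (Eventually.of_forall hmem)).mgf_le t
      have heq : ∫ a, exp (t * (f (e (a, x)) - m)) ∂(ν 0)
          = exp (t * (g x - m)) * ∫ a, exp (t * (f (e (a, x)) - g x)) ∂(ν 0) := by
        rw [← integral_const_mul]
        congr 1; ext a
        rw [← exp_add]; congr 1; ring
      rw [heq]
      gcongr
      simpa [mgf, hg, abs_of_nonneg hc] using hh
    have hge : Measurable fun x => exp (t * (g x - m)) := ((hgm.sub_const m).const_mul t).exp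
    have hgei : Integrable (fun x => exp (t * (g x - m))) π' :=
      Integrable.of_bound hge.aestronglyMeasurable _ (Eventually.of_forall fun p => hexpB _ (hgB _))
    rw [h1]
    calc ∫ x, ∫ a, exp (t * (f (e (a, x)) - m)) ∂(ν 0) ∂π'
        ≤ ∫ x, exp (t * (g x - m)) * exp ((c / 2) ^ 2 * t ^ 2 / 2) ∂π' :=
          integral_mono hexpi.integral_prod_right (hgei.mul_const _) hkey
      _ = (∫ x, exp (t * (g x - m)) ∂π') * exp ((c / 2) ^ 2 * t ^ 2 / 2) := integral_mul_const _ _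
      _ ≤ exp (n * (c / 2) ^ 2 * t ^ 2 / 2) * exp ((c / 2) ^ 2 * t ^ 2 / 2) := by
          gcongr
          rw [hmp_m]; exact hih
      _ = _ := by
          rw [← exp_add]; congr 1; push_cast; ring

open ProbabilityTheory in
/-- McDiarmid's inequality. -/
lemma mcd {Z : Type*} [MeasurableSpace Z] {ι : Type*} [Fintype ι] (c : ℝ) (hc : 0 ≤ c) (B : ℝ)
    (ν : ι → Measure Z) [∀ i, IsProbabilityMeasure (ν i)]
    (f : (ι → Z) → ℝ) (hf : Measurable f) (hB : ∀ x, |f x| ≤ B)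
    (hd : ∀ x y k, (∀ j, j ≠ k → x j = y j) → f x - f y ≤ c) (ε : ℝ) (hε : 0 ≤ ε) :
    (Measure.pi ν).real {x | ε ≤ f x - ∫ y, f y ∂(Measure.pi ν)}
      ≤ exp (- ε ^ 2 / (2 * (Fintype.card ι * (c / 2) ^ 2))) := by
  lift c to NNReal using hc
  have hbd : |∫ y, f y ∂(Measure.pi ν)| ≤ B := by
    have := norm_integral_le_of_norm_le_const (μ := Measure.pi ν) (f := f) (C := B)
        (Eventually.of_forall fun p => hB _)
    simpa using this
  set E := (Fintype.equivFin ι).symm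
  have hmp := measurePreserving_piCongrLeft (α := fun _ : ι => Z) ν E
  set e := MeasurableEquiv.piCongrLeft (fun _ : ι => Z) E with he
  have hea : ∀ x i, e x (E i) = x i := fun x i => by
    simp [he, MeasurableEquiv.coe_piCongrLeft]
  have hs : HasSubgaussianMGF (fun x => f x - ∫ y, f y ∂(Measure.pi ν))
      (Fintype.card ι * (c / 2) ^ 2) (Measure.pi ν) := by
    refine ⟨fun t => ?_, fun t => ?_⟩
    · refine Integrable.of_bound
        ((hf.sub_const _).const_mul t).exp.aestronglyMeasurable (exp (|t| * (2 * B)))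
        (Eventually.of_forall fun x => ?_)
      rw [Real.norm_eq_abs, abs_exp]
      apply exp_le_exp.2
      refine (le_abs_self _).trans ?_
      rw [abs_mul]
      gcongr
      exact (abs_sub _ _).trans (by linarith [hB x])
    · have := mcd_mgf_fin c c.2 B t _ (fun i => ν (E i)) (fun x => f (e x)) (hf.comp e.measurable)
        (fun x => hB _) (fun x y k hxy => hd _ _ (E k) (fun j hj => by
          obtain ⟨j, rfl⟩ := E.surjective j
          rw [hea, hea]
          exact hxy j (fun h => hj (by rw [h]))))
      rw [hmp.integral_comp' (g := f),
        hmp.integral_comp' (g := fun x => exp (t * (f x - ∫ y, f y ∂(Measure.pi ν))))] at this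
      simpa [mgf] using this
  have := hs.measure_ge_le hε
  simpa using this

lemma sgn_abs (b : Bool) : |sgn b| = 1 := by cases b <;> simp [sgn]

lemma sgn_not (b : Bool) : sgn (!b) = - sgn b := by cases b <;> simp [sgn]

lemma avg_abs_le {ι : Type*} [Fintype ι] (u : ι → ℝ) (hu : ∀ k, |u k| ≤ 1) :
    |(Fintype.card ι : ℝ)⁻¹ * ∑ k, u k| ≤ 1 := by
  rw [abs_mul, abs_of_nonneg (by positivity)]
  have : |∑ k, u k| ≤ Fintype.card ι := by
    refine (Finset.abs_sum_le_sum_abs _ _).trans ?_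
    refine (Finset.sum_le_sum fun k _ => hu k).trans ?_
    simp
  calc (Fintype.card ι : ℝ)⁻¹ * |∑ k, u k| ≤ (Fintype.card ι : ℝ)⁻¹ * Fintype.card ι := by gcongr
    _ ≤ 1 := inv_mul_le_one

lemma avg_diff {ι : Type*} [Fintype ι] (u v : ι → ℝ) (k : ι) (h : ∀ j, j ≠ k → u j = v j)
    (hk : u k - v k ≤ 1) :
    (Fintype.card ι : ℝ)⁻¹ * ∑ k, u k ≤ (Fintype.card ι : ℝ)⁻¹ * ∑ k, v k
      + (Fintype.card ι : ℝ)⁻¹ := by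
  have : ∑ k, u k - ∑ k, v k = u k - v k := by
    rw [← Finset.sum_sub_distrib]
    refine Finset.sum_eq_single k (fun j _ hj => by rw [h j hj, sub_self]) (by simp)
  have h2 : ∑ k, u k ≤ ∑ k, v k + 1 := by linarith
  calc (Fintype.card ι : ℝ)⁻¹ * ∑ k, u k ≤ (Fintype.card ι : ℝ)⁻¹ * (∑ k, v k + 1) := by gcongr
    _ = _ := by ring

lemma bdd_of_abs {I : Type*} (v : I → ℝ) {C : ℝ} (hv : ∀ i, |v i| ≤ C) :
    BddAbove (Set.range v) :=
  ⟨C, by rintro _ ⟨i, rfl⟩; exact (abs_le.1 (hv i)).2⟩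

lemma sup_abs_le {I : Type*} [Nonempty I] (v : I → ℝ) {C : ℝ} (hv : ∀ i, |v i| ≤ C) :
    |⨆ i, v i| ≤ C := by
  rw [abs_le]
  refine ⟨?_, ciSup_le fun i => (abs_le.1 (hv i)).2⟩
  obtain ⟨i⟩ := ‹Nonempty I›
  exact (abs_le.1 (hv i)).1.trans (le_ciSup (bdd_of_abs v hv) i)

lemma sup_le_add {I : Type*} [Nonempty I] (u v : I → ℝ) {C c : ℝ} (hv : ∀ i, |v i| ≤ C)
    (h : ∀ i, u i ≤ v i + c) : ⨆ i, u i ≤ (⨆ i, v i) + c :=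
  ciSup_le fun i => (h i).trans (by gcongr; exact le_ciSup (bdd_of_abs v hv) i)

/-- signed sup -/
def sgnSup {Z I ι : Type*} [Fintype ι] (g : I → Z → ℝ) (σ : ι → Bool) (z : ι → Z) : ℝ :=
  ⨆ i, (Fintype.card ι : ℝ)⁻¹ * ∑ k, sgn (σ k) * g i (z k)

def radG {Z I ι : Type*} [Fintype ι] [DecidableEq ι] (g : I → Z → ℝ) (z : ι → Z) : ℝ :=
  (∑ σ : ι → Bool, sgnSup g σ z) / 2 ^ Fintype.card ι

def devSup {Z I ι : Type*} [MeasurableSpace Z] [Fintype ι] (g : I → Z → ℝ) (ν : ι → Measure Z)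
    (z : ι → Z) : ℝ :=
  ⨆ i, (Fintype.card ι : ℝ)⁻¹ * ∑ k, (∫ a, g i a ∂(ν k) - g i (z k))

set_option linter.unusedSectionVars false

section core

variable {Z I ι : Type*} [MeasurableSpace Z] [Countable I] [Nonempty I] [Fintype ι]
  [DecidableEq ι] (g : I → Z → ℝ) (hg : ∀ i, Measurable (g i))
  (hg01 : ∀ i a, g i a ∈ Set.Icc (0 : ℝ) 1) (ν : ι → Measure Z) [∀ k, IsProbabilityMeasure (ν k)]

lemma g_abs (hg01 : ∀ i a, g i a ∈ Set.Icc (0 : ℝ) 1) (i : I) (a : Z) : |g i a| ≤ 1 := by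
  rw [abs_le]; exact ⟨by linarith [(hg01 i a).1], (hg01 i a).2⟩

lemma sg_abs (hg01 : ∀ i a, g i a ∈ Set.Icc (0 : ℝ) 1) (b : Bool) (i : I) (a : Z) :
    |sgn b * g i a| ≤ 1 := by
  rw [abs_mul, sgn_abs, one_mul]; exact g_abs g hg01 i a

lemma gint (hg : ∀ i, Measurable (g i)) (hg01 : ∀ i a, g i a ∈ Set.Icc (0 : ℝ) 1)
    (P : Measure Z) [IsProbabilityMeasure P] (i : I) : Integrable (g i) P :=
  Integrable.of_bound (hg i).aestronglyMeasurable 1 (Eventually.of_forall fun a => g_abs g hg01 i a)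

lemma gint_mem (hg : ∀ i, Measurable (g i)) (hg01 : ∀ i a, g i a ∈ Set.Icc (0 : ℝ) 1)
    (P : Measure Z) [IsProbabilityMeasure P] (i : I) : ∫ a, g i a ∂P ∈ Set.Icc (0 : ℝ) 1 := by
  refine ⟨integral_nonneg fun a => (hg01 i a).1, ?_⟩
  have := integral_mono (gint g hg hg01 P i) (integrable_const (1 : ℝ)) fun a => (hg01 i a).2
  simpa using this

lemma dg_abs (hg : ∀ i, Measurable (g i)) (hg01 : ∀ i a, g i a ∈ Set.Icc (0 : ℝ) 1)
    (P : Measure Z) [IsProbabilityMeasure P] (i : I) (b : Z) : |∫ a, g i a ∂P - g i b| ≤ 1 := by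
  have h1 := gint_mem g hg hg01 P i
  have h2 := hg01 i b
  rw [abs_le]; constructor <;> linarith [h1.1, h1.2, h2.1, h2.2]

lemma sgnSup_meas (hg : ∀ i, Measurable (g i)) (σ : ι → Bool) :
    Measurable (sgnSup g σ : (ι → Z) → ℝ) := by
  unfold sgnSup
  refine Measurable.iSup fun i => ?_
  refine Measurable.const_mul (Finset.measurable_sum _ fun k _ => ?_) _
  exact ((hg i).comp (measurable_pi_apply k)).const_mul _

lemma sgnSup_abs (hg01 : ∀ i a, g i a ∈ Set.Icc (0 : ℝ) 1) (σ : ι → Bool) (z : ι → Z) :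
    |sgnSup g σ z| ≤ 1 :=
  sup_abs_le _ fun _ => avg_abs_le _ fun _ => sg_abs g hg01 _ _ _

lemma sgnSup_int (hg : ∀ i, Measurable (g i)) (hg01 : ∀ i a, g i a ∈ Set.Icc (0 : ℝ) 1)
    (σ : ι → Bool) : Integrable (sgnSup g σ) (Measure.pi ν) :=
  Integrable.of_bound (sgnSup_meas g hg σ).aestronglyMeasurable 1
    (Eventually.of_forall fun a => sgnSup_abs g hg01 σ a)

lemma radG_meas (hg : ∀ i, Measurable (g i)) : Measurable (radG g : (ι → Z) → ℝ) := by
  unfold radG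
  exact (Finset.measurable_sum _ fun σ _ => sgnSup_meas g hg σ).div_const _

lemma devSup_meas (hg : ∀ i, Measurable (g i)) : Measurable (devSup g ν) := by
  unfold devSup
  refine Measurable.iSup fun i => ?_
  refine Measurable.const_mul (Finset.measurable_sum _ fun k _ => ?_) _
  exact ((hg i).comp (measurable_pi_apply k)).const_sub _

lemma devSup_abs (hg : ∀ i, Measurable (g i)) (hg01 : ∀ i a, g i a ∈ Set.Icc (0 : ℝ) 1)
    (z : ι → Z) : |devSup g ν z| ≤ 1 :=
  sup_abs_le _ fun _ => avg_abs_le _ fun _ => dg_abs g hg hg01 _ _ _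

lemma devSup_int (hg : ∀ i, Measurable (g i)) (hg01 : ∀ i a, g i a ∈ Set.Icc (0 : ℝ) 1) :
    Integrable (devSup g ν) (Measure.pi ν) :=
  Integrable.of_bound (devSup_meas g ν hg).aestronglyMeasurable 1
    (Eventually.of_forall fun a => devSup_abs g ν hg hg01 a)

lemma card_bool_fun : (Fintype.card (ι → Bool) : ℝ) = 2 ^ Fintype.card ι := by simp

lemma radG_abs (hg01 : ∀ i a, g i a ∈ Set.Icc (0 : ℝ) 1) (z : ι → Z) : |radG g z| ≤ 1 := by
  have := avg_abs_le (fun σ : ι → Bool => sgnSup g σ z) (fun σ => sgnSup_abs g hg01 σ z)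
  rw [card_bool_fun] at this
  rwa [radG, div_eq_inv_mul]

lemma radG_int (hg : ∀ i, Measurable (g i)) (hg01 : ∀ i a, g i a ∈ Set.Icc (0 : ℝ) 1) :
    Integrable (radG g) (Measure.pi ν) :=
  Integrable.of_bound (radG_meas g hg).aestronglyMeasurable 1
    (Eventually.of_forall fun a => radG_abs g hg01 a)

lemma devSup_diff (hg : ∀ i, Measurable (g i)) (hg01 : ∀ i a, g i a ∈ Set.Icc (0 : ℝ) 1)
    (x y : ι → Z) (k : ι) (h : ∀ j, j ≠ k → x j = y j) :
    devSup g ν x ≤ devSup g ν y + (Fintype.card ι : ℝ)⁻¹ := by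
  refine sup_le_add (C := 1) _ _ (fun i => avg_abs_le _ fun _ => dg_abs g hg hg01 _ _ _) fun i => ?_
  refine avg_diff _ _ k (fun j hj => by rw [h j hj]) ?_
  linarith [(hg01 i (x k)).1, (hg01 i (y k)).2]

lemma sgnSup_diff (hg01 : ∀ i a, g i a ∈ Set.Icc (0 : ℝ) 1) (σ : ι → Bool)
    (x y : ι → Z) (k : ι) (h : ∀ j, j ≠ k → x j = y j) :
    sgnSup g σ x ≤ sgnSup g σ y + (Fintype.card ι : ℝ)⁻¹ := by
  refine sup_le_add (C := 1) _ _ (fun i => avg_abs_le _ fun _ => sg_abs g hg01 _ _ _) fun i => ?_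
  refine avg_diff _ _ k (fun j hj => by rw [h j hj]) ?_
  have h1 := hg01 i (x k)
  have h2 := hg01 i (y k)
  cases σ k <;> simp [sgn] <;> linarith [h1.1, h1.2, h2.1, h2.2]

lemma radG_diff (hg01 : ∀ i a, g i a ∈ Set.Icc (0 : ℝ) 1)
    (x y : ι → Z) (k : ι) (h : ∀ j, j ≠ k → x j = y j) :
    radG g x ≤ radG g y + (Fintype.card ι : ℝ)⁻¹ := by
  unfold radG
  rw [div_add' _ _ _ (by positivity)]
  gcongr
  refine (Finset.sum_le_sum fun σ _ => sgnSup_diff g hg01 σ x y k h).trans ?_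
  rw [Finset.sum_add_distrib, Finset.sum_const, Finset.card_univ, nsmul_eq_mul, card_bool_fun,
    mul_comm]

/-- Symmetrization for one sign pattern. -/
lemma symm_one (hg : ∀ i, Measurable (g i)) (hg01 : ∀ i a, g i a ∈ Set.Icc (0 : ℝ) 1)
    (σ : ι → Bool) :
    ∫ z, devSup g ν z ∂(Measure.pi ν) ≤
      ∫ z, sgnSup g σ z ∂(Measure.pi ν) + ∫ z, sgnSup g (fun k => !σ k) z ∂(Measure.pi ν) := by
  set N := (Fintype.card ι : ℝ)⁻¹ with hN
  set ρ := Measure.pi ν with hρ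
  have hd : ∀ i a b, |g i a - g i b| ≤ 1 := fun i a b => by
    rw [abs_le]; constructor <;> linarith [(hg01 i a).1, (hg01 i a).2, (hg01 i b).1, (hg01 i b).2]
  let D : (ι → Z) × (ι → Z) → ℝ := fun p => ⨆ i, N * ∑ k, (g i (p.2 k) - g i (p.1 k))
  have hDm : Measurable D := by
    refine Measurable.iSup fun i => ?_
    refine Measurable.const_mul (Finset.measurable_sum _ fun k _ => ?_) _
    exact ((hg i).comp ((measurable_pi_apply k).comp measurable_snd)).sub
      ((hg i).comp ((measurable_pi_apply k).comp measurable_fst))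
  have hDa : ∀ p, |D p| ≤ 1 := fun p => sup_abs_le _ fun i => avg_abs_le _ fun k => hd _ _ _
  have hDi : Integrable D (ρ.prod ρ) := Integrable.of_bound hDm.aestronglyMeasurable 1
    (Eventually.of_forall hDa)
  have h1 : ∀ z, devSup g ν z ≤ ∫ z', D (z, z') ∂ρ := by
    intro z
    refine ciSup_le fun i => ?_
    have hev : ∀ k, MeasurePreserving (Function.eval k) ρ (ν k) := fun k =>
      measurePreserving_eval ν k
    have hgi : ∀ k, Integrable (fun z' : ι → Z => g i (z' k)) ρ := fun k =>
      (hev k).integrable_comp_of_integrable (gint g hg hg01 (ν k) i)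
    have hge : ∀ k, ∫ z', g i (z' k) ∂ρ = ∫ a, g i a ∂(ν k) := fun k => by
      rw [← (hev k).map_eq, integral_map (hev k).measurable.aemeasurable
        (hg i).aestronglyMeasurable]
    have : N * ∑ k, (∫ a, g i a ∂(ν k) - g i (z k))
        = ∫ z', N * ∑ k, (g i (z' k) - g i (z k)) ∂ρ := by
      have hsi : ∀ k ∈ Finset.univ, Integrable (fun z' : ι → Z => g i (z' k) - g i (z k)) ρ :=
        fun k _ => (hgi k).sub (integrable_const _)
      rw [integral_const_mul, integral_finsetSum _ hsi]
      congr 1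
      refine Finset.sum_congr rfl fun k _ => ?_
      rw [integral_sub (hgi k) (integrable_const _), hge k]
      simp
    rw [← hN, this]
    refine integral_mono ((integrable_finsetSum _ fun k _ =>
      (hgi k).sub (integrable_const _)).const_mul _) ?_ fun z' => ?_
    · exact Integrable.of_bound (hDm.comp measurable_prodMk_left).aestronglyMeasurable 1
        (Eventually.of_forall fun _ => hDa _)
    · exact le_ciSup (f := fun i => N * ∑ k, (g i (z' k) - g i (z k)))
        (bdd_of_abs _ fun i => avg_abs_le _ fun k => hd _ _ _) i
  have h2 : ∫ z, devSup g ν z ∂ρ ≤ ∫ p, D p ∂(ρ.prod ρ) := by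
    rw [integral_prod _ hDi]
    exact integral_mono (devSup_int g ν hg hg01) hDi.integral_prod_left h1
  have hmp := measurePreserving_arrowProdEquivProdArrow Z Z ι ν ν
  set Q := Measure.pi fun k => (ν k).prod (ν k) with hQ
  have h3 : ∫ p, D p ∂(ρ.prod ρ) = ∫ w, D (fun k => (w k).1, fun k => (w k).2) ∂Q := by
    rw [← hmp.integral_comp' (g := D)]
    rfl
  have hmps : MeasurePreserving (fun (w : ι → Z × Z) k => if σ k then w k else (w k).swap) Q Q := by
    refine measurePreserving_pi (fun k => (ν k).prod (ν k)) (fun k => (ν k).prod (ν k))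
      (f := fun k p => if σ k then p else p.swap) fun k => ?_
    cases σ k
    · simpa using Measure.measurePreserving_swap
    · exact MeasurePreserving.id _
  have hm1 : MeasurePreserving (fun (w : ι → Z × Z) k => (w k).1) Q ρ :=
    measurePreserving_pi (fun k => (ν k).prod (ν k)) ν (f := fun k p => p.1) fun k => measurePreserving_fst
  have hm2 : MeasurePreserving (fun (w : ι → Z × Z) k => (w k).2) Q ρ :=
    measurePreserving_pi (fun k => (ν k).prod (ν k)) ν (f := fun k p => p.2) fun k => measurePreserving_snd
  have hpair : Measurable fun w : ι → Z × Z => ((fun k => (w k).1, fun k => (w k).2) : (ι → Z) × (ι → Z)) :=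
    hm1.measurable.prodMk hm2.measurable
  have h4 : ∫ w, D (fun k => (w k).1, fun k => (w k).2) ∂Q
      = ∫ w, (⨆ i, N * ∑ k, sgn (σ k) * (g i (w k).2 - g i (w k).1)) ∂Q := by
    conv_lhs => rw [← hmps.map_eq]
    have hDp : Measurable fun w : ι → Z × Z => D (fun k => (w k).1, fun k => (w k).2) :=
      hDm.comp hpair
    rw [integral_map hmps.measurable.aemeasurable hDp.aestronglyMeasurable]
    congr 1; ext w
    simp only [D]
    congr 1; ext i
    congr 1
    refine Finset.sum_congr rfl fun k _ => ?_
    cases σ k <;> simp [sgn]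
  have hi1 : Integrable (fun w : ι → Z × Z => sgnSup g (fun k => !σ k) fun k => (w k).1) Q :=
    hm1.integrable_comp_of_integrable (sgnSup_int g ν hg hg01 _)
  have hi2 : Integrable (fun w : ι → Z × Z => sgnSup g σ fun k => (w k).2) Q :=
    hm2.integrable_comp_of_integrable (sgnSup_int g ν hg hg01 _)
  have h5 : ∫ w, (⨆ i, N * ∑ k, sgn (σ k) * (g i (w k).2 - g i (w k).1)) ∂Q
      ≤ ∫ w, (sgnSup g σ (fun k => (w k).2) + sgnSup g (fun k => !σ k) fun k => (w k).1) ∂Q := by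
    refine integral_mono ?_ (hi2.add hi1) fun w => ?_
    · refine Integrable.of_bound (Measurable.aestronglyMeasurable ?_) 1
        (Eventually.of_forall fun w => ?_)
      · refine Measurable.iSup fun i => ?_
        refine Measurable.const_mul (Finset.measurable_sum _ fun k _ => ?_) _
        exact (((hg i).comp (measurable_snd.comp (measurable_pi_apply k))).sub
          ((hg i).comp (measurable_fst.comp (measurable_pi_apply k)))).const_mul _
      · refine sup_abs_le _ fun i => avg_abs_le _ fun k => ?_
        rw [abs_mul, sgn_abs, one_mul]; exact hd _ _ _
    · refine ciSup_le fun i => ?_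
      have e1 := le_ciSup (f := fun i => N * ∑ k, sgn (σ k) * g i (w k).2)
        (bdd_of_abs _ fun i => avg_abs_le _ fun k => sg_abs g hg01 _ _ _) i
      have e2 := le_ciSup (f := fun i => N * ∑ k, sgn (!σ k) * g i (w k).1)
        (bdd_of_abs _ fun i => avg_abs_le _ fun k => sg_abs g hg01 _ _ _) i
      refine le_trans (le_of_eq ?_) (add_le_add e1 e2)
      simp only [sgn_not]
      rw [← mul_add, ← Finset.sum_add_distrib]
      congr 1
      refine Finset.sum_congr rfl fun k _ => ?_
      ring
  rw [integral_add hi2 hi1] at h5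
  have h6 : ∫ w, sgnSup g σ (fun k => (w k).2) ∂Q = ∫ z, sgnSup g σ z ∂ρ := by
    conv_rhs => rw [← hm2.map_eq]
    rw [integral_map hm2.measurable.aemeasurable (sgnSup_meas g hg _).aestronglyMeasurable]
  have h7 : ∫ w, sgnSup g (fun k => !σ k) (fun k => (w k).1) ∂Q
      = ∫ z, sgnSup g (fun k => !σ k) z ∂ρ := by
    conv_rhs => rw [← hm1.map_eq]
    rw [integral_map hm1.measurable.aemeasurable (sgnSup_meas g hg _).aestronglyMeasurable]
  linarith

lemma symm_all (hg : ∀ i, Measurable (g i)) (hg01 : ∀ i a, g i a ∈ Set.Icc (0 : ℝ) 1) :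
    ∫ z, devSup g ν z ∂(Measure.pi ν) ≤ 2 * ∫ z, radG g z ∂(Measure.pi ν) := by
  have h1 : ∫ z, radG g z ∂(Measure.pi ν)
      = (∑ σ : ι → Bool, ∫ z, sgnSup g σ z ∂(Measure.pi ν)) / 2 ^ Fintype.card ι := by
    unfold radG
    rw [integral_div, integral_finsetSum _ fun σ _ => sgnSup_int g ν hg hg01 σ]
  have h2 := Finset.sum_le_sum fun (σ : ι → Bool) (_ : σ ∈ Finset.univ) => symm_one g ν hg hg01 σ
  rw [Finset.sum_add_distrib, Finset.sum_const, Finset.card_univ, nsmul_eq_mul, card_bool_fun] at h2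
  have h3 : ∑ σ : ι → Bool, ∫ z, sgnSup g (fun k => !σ k) z ∂(Measure.pi ν)
      = ∑ σ : ι → Bool, ∫ z, sgnSup g σ z ∂(Measure.pi ν) := by
    refine Fintype.sum_equiv (Equiv.piCongrRight fun _ => Equiv.boolNot) _ _ fun σ => ?_
    rfl
  rw [h3] at h2
  rw [h1, ← mul_div_assoc, le_div_iff₀ (by positivity)]
  linarith

/-- The Rademacher generalization bound for independent samples. -/
lemma rad_bound [Nonempty ι] (hg : ∀ i, Measurable (g i))
    (hg01 : ∀ i a, g i a ∈ Set.Icc (0 : ℝ) 1) (δ : ℝ) (hδ0 : 0 < δ) (hδ1 : δ < 1) :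
    Measure.pi ν {z | ∃ i, (Fintype.card ι : ℝ)⁻¹ * ∑ k, g i (z k) + 2 * radG g z
        + 3 * √(Real.log (2 / δ) / (2 * Fintype.card ι))
        < (Fintype.card ι : ℝ)⁻¹ * ∑ k, ∫ a, g i a ∂(ν k)} ≤ ENNReal.ofReal δ := by
  have hc : (0 : ℝ) < Fintype.card ι := by exact_mod_cast Fintype.card_pos
  have hlog : 0 < Real.log (2 / δ) := Real.log_pos (by rw [lt_div_iff₀ hδ0]; linarith)
  have hmean : ∫ z, (devSup g ν z - 2 * radG g z) ∂(Measure.pi ν) ≤ 0 := by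
    rw [integral_sub (devSup_int g ν hg hg01) ((radG_int g ν hg hg01).const_mul 2),
      integral_const_mul]
    linarith [symm_all g ν hg hg01]
  have hmc := mcd (3 * (Fintype.card ι : ℝ)⁻¹) (by positivity) 3 ν
    (fun z => devSup g ν z - 2 * radG g z)
    ((devSup_meas g ν hg).sub ((radG_meas g hg).const_mul 2))
    (fun z => by
      have h1 := abs_le.1 (devSup_abs g ν hg hg01 z)
      have h2 := abs_le.1 (radG_abs g hg01 z)
      rw [abs_le]; constructor <;> linarith [h1.1, h1.2, h2.1, h2.2])
    (fun x y k h => by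
      have h1 := devSup_diff g ν hg hg01 x y k h
      have h2 := radG_diff g hg01 y x k fun j hj => (h j hj).symm
      linarith)
    (3 * √(Real.log (2 / δ) / (2 * Fintype.card ι))) (by positivity)
  have hexp : exp (-(3 * √(Real.log (2 / δ) / (2 * Fintype.card ι))) ^ 2 /
      (2 * (Fintype.card ι * (3 * (Fintype.card ι : ℝ)⁻¹ / 2) ^ 2))) = δ / 2 := by
    rw [mul_pow, Real.sq_sqrt (by positivity)]
    have : -(3 ^ 2 * (Real.log (2 / δ) / (2 * Fintype.card ι))) /
      (2 * (Fintype.card ι * (3 * (Fintype.card ι : ℝ)⁻¹ / 2) ^ 2)) = - Real.log (2 / δ) := by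
      field_simp
    rw [this, exp_neg, exp_log (by positivity), inv_div]
  rw [hexp] at hmc
  refine le_trans (measure_mono fun z hz => ?_)
    ((ENNReal.le_ofReal_iff_toReal_le (measure_ne_top _ _) hδ0.le).2
      (hmc.trans (by linarith)))
  obtain ⟨i, hi⟩ := hz
  have e1 := le_ciSup (f := fun i => (Fintype.card ι : ℝ)⁻¹ * ∑ k, (∫ a, g i a ∂(ν k) - g i (z k)))
    (bdd_of_abs _ fun i => avg_abs_le _ fun k => dg_abs g hg hg01 _ _ _) i
  simp only [Finset.sum_sub_distrib, mul_sub] at e1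
  have e2 : devSup g ν z = ⨆ i, ((Fintype.card ι : ℝ)⁻¹ * ∑ k, ∫ a, g i a ∂(ν k)
      - (Fintype.card ι : ℝ)⁻¹ * ∑ k, g i (z k)) := by
    simp only [devSup, Finset.sum_sub_distrib, mul_sub]
  simp only [Set.mem_ofPred_eq]
  rw [← e2] at e1
  linarith

end core

lemma iSup_subtype_le {A : Type*} (F : Set A) [Nonempty F] (v : A → ℝ)
    (hv : ∀ f ∈ F, |v f| ≤ 1) : ⨆ i : F, v i ≤ ⨆ f ∈ F, v f := by
  have hb : BddAbove (Set.range fun f => ⨆ (_ : f ∈ F), v f) := by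
    refine ⟨1, ?_⟩
    rintro _ ⟨f, rfl⟩
    by_cases hf : f ∈ F
    · simpa [hf] using (abs_le.1 (hv f hf)).2
    · simp [hf]
  refine ciSup_le fun i => ?_
  refine le_trans (le_of_eq ?_) (le_ciSup hb i.1)
  simp

section joint

variable {W : Type*} [MeasurableSpace W]

open Classical in
lemma exists_fix (μ : Measure (Measure W)) [IsProbabilityMeasure μ]
    (hμ : ∀ᵐ P ∂μ, IsProbabilityMeasure P) :
    ∃ φ : Measure W → Measure W, Measurable φ ∧ (∀ P, IsProbabilityMeasure (φ P)) ∧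
      ∀ P, IsProbabilityMeasure P → φ P = P := by
  obtain ⟨P0, hP0⟩ := hμ.exists
  refine ⟨fun P => if P Set.univ = 1 then P else P0, ?_, ?_, ?_⟩
  · refine Measurable.ite ?_ measurable_id measurable_const
    exact (Measure.measurable_coe MeasurableSet.univ) (measurableSet_singleton 1)
  · intro P
    by_cases h : P Set.univ = 1
    · simp only [h, if_true]; exact ⟨h⟩
    · simp only [h, if_false]; exact hP0
  · intro P hP
    simp [hP.measure_univ]

lemma ae_all_prob (n : ℕ) (μ : Measure (Measure W)) [IsProbabilityMeasure μ]
    (hμ : ∀ᵐ P ∂μ, IsProbabilityMeasure P) :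
    ∀ᵐ P ∂(Measure.pi fun _ : Fin n => μ), ∀ j, IsProbabilityMeasure (P j) := by
  rw [ae_all_iff]
  intro j
  exact (Measure.quasiMeasurePreserving_eval (fun _ : Fin n => μ) j).ae hμ

open ProbabilityTheory in
lemma kernel_aemeas (n m : ℕ) (μ : Measure (Measure W)) [IsProbabilityMeasure μ]
    (hμ : ∀ᵐ P ∂μ, IsProbabilityMeasure P) :
    AEMeasurable (fun P : Fin n → Measure W =>
      (Measure.pi fun p : Fin n × Fin m => P p.1).map fun s => (P, s))
      (Measure.pi fun _ : Fin n => μ) := by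
  obtain ⟨φ, hφm, hφp, hφ⟩ := exists_fix μ hμ
  have hKm : Measurable fun P : Fin n → Measure W =>
      Measure.pi fun p : Fin n × Fin m => φ (P p.1) := by
    refine Measurable.measure_of_isPiSystem_of_isProbabilityMeasure generateFrom_pi.symm
      isPiSystem_pi ?_
    rintro _ ⟨t, ht, rfl⟩
    simp only [Measure.pi_pi]
    refine Finset.measurable_prod _ fun p _ => ?_
    exact (Measure.measurable_coe (ht p (Set.mem_univ _))).comp
      (hφm.comp (measurable_pi_apply p.1))
  let κ : Kernel (Fin n → Measure W) (Fin n × Fin m → W) := ⟨_, hKm⟩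
  have : IsMarkovKernel κ := ⟨fun P => by
    change IsProbabilityMeasure (Measure.pi fun p : Fin n × Fin m => φ (P p.1))
    infer_instance⟩
  refine ⟨fun P => (κ P).map fun s => (P, s), ?_, ?_⟩
  · refine Measure.measurable_of_measurable_coe _ fun s hs => ?_
    have : (fun P => ((κ P).map fun s => (P, s)) s) = fun P => κ P (Prod.mk P ⁻¹' s) := by
      ext P
      rw [Measure.map_apply measurable_prodMk_left hs]
    rw [this]
    exact Kernel.measurable_kernel_prodMk_left hs
  · filter_upwards [ae_all_prob n μ hμ] with P hP
    change _ = (Measure.pi fun p : Fin n × Fin m => φ (P p.1)).map fun s => (P, s)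
    congr 2
    ext1 p
    rw [hφ _ (hP p.1)]

end joint

lemma jointLaw_apply {X : Type*} [MeasurableSpace X] (n m : ℕ)
    (μ : Measure (Measure (X × Ysp))) [IsProbabilityMeasure μ]
    (hμ : ∀ᵐ P ∂μ, IsProbabilityMeasure P)
    {s : Set ((Fin n → Measure (X × Ysp)) × ((Fin n × Fin m) → X × Ysp))} (hs : MeasurableSet s) :
    jointLaw n m μ s = ∫⁻ P, (Measure.pi fun p : Fin n × Fin m => P p.1) (Prod.mk P ⁻¹' s)
      ∂(Measure.pi fun _ : Fin n => μ) := by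
  rw [jointLaw, Measure.bind_apply hs (kernel_aemeas n m μ hμ)]
  congr 1; ext P
  rw [Measure.map_apply measurable_prodMk_left hs]

lemma loss_meas {X : Type*} [MeasurableSpace X] (ℓ : Ysp → Ysp → ℝ) (f : X → Ysp)
    (hf : Measurable f) : Measurable fun p : X × Ysp => ℓ (f p.1) p.2 := by
  have h : Measurable fun q : Ysp × Ysp => ℓ q.1 q.2 := measurable_of_countable _
  exact h.comp ((hf.comp measurable_fst).prodMk measurable_snd)

lemma risk_meas {X : Type*} [MeasurableSpace X] (ℓ : Ysp → Ysp → ℝ)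
    (hℓ01 : ∀ a b, ℓ a b ∈ Set.Icc (0 : ℝ) 1) (f : X → Ysp)
    (hf : Measurable f) : Measurable fun P : Measure (X × Ysp) => risk ℓ P f := by
  have : (fun P : Measure (X × Ysp) => risk ℓ P f)
      = fun P => (∫⁻ p, ENNReal.ofReal (ℓ (f p.1) p.2) ∂P).toReal := by
    ext P
    rw [risk, integral_eq_lintegral_of_nonneg_ae (Eventually.of_forall fun p => (hℓ01 _ _).1)
      (loss_meas ℓ f hf).aestronglyMeasurable]
  rw [this]
  exact (Measure.measurable_lintegral (loss_meas ℓ f hf).ennreal_ofReal).ennreal_toReal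

/-- With confidence at least `1 - 2δ` over the draw of `n` domains i.i.d.
from the meta-distribution `μ` and `m` i.i.d. samples from each domain,
simultaneously for all `f ∈ F`:
`L^μ(f) ≤ L̂^μ(f) + 2 R_{mn}(F) + 2 R_n(F) + 3 √(ln(2/δ)/(2mn)) + 3 √(ln(2/δ)/n)`. -/
theorem statement2 {X : Type*} [MeasurableSpace X]
    (ℓ : Ysp → Ysp → ℝ) (hℓ01 : ∀ a b, ℓ a b ∈ Set.Icc (0 : ℝ) 1)
    (hℓLip : LipschitzWith 1 fun p : Ysp × Ysp => ℓ p.1 p.2)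
    (F : Set (X → Ysp)) (hFcount : F.Countable) (hFmeas : ∀ f ∈ F, Measurable f)
    (μ : Measure (Measure (X × Ysp))) [IsProbabilityMeasure μ]
    (hμprob : ∀ᵐ P ∂μ, IsProbabilityMeasure P)
    (n m : ℕ) (hn : 0 < n) (hm : 0 < m)
    (δ : ℝ) (hδ0 : 0 < δ) (hδ1 : δ < 1) :
    ENNReal.ofReal (1 - 2 * δ) ≤
      jointLaw n m μ {ω | ∀ f ∈ F,
        metaRisk ℓ μ f ≤
          ((m : ℝ) * n)⁻¹ * ∑ p : Fin n × Fin m, ℓ (f (ω.2 p).1) (ω.2 p).2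
            + 2 * rad ℓ F ω.2 + 2 * radDom ℓ F ω.1
            + 3 * Real.sqrt (Real.log (2 / δ) / (2 * m * n))
            + 3 * Real.sqrt (Real.log (2 / δ) / n)} := by
  rcases F.eq_empty_or_nonempty with hFe | hFne
  · subst hFe
    have hJ : jointLaw n m μ Set.univ = 1 := by
      rw [jointLaw_apply n m μ hμprob MeasurableSet.univ]
      rw [lintegral_congr_ae (g := fun _ => 1)]
      · simp
      · filter_upwards [ae_all_prob n μ hμprob] with P hP
        simp
    simp only [Set.mem_empty_iff_false, false_imp_iff, implies_true, Set.ofPred_true]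
    rw [hJ]
    exact ENNReal.ofReal_le_one.2 (by linarith)
  have : Nonempty F := hFne.to_subtype
  have : Countable F := hFcount.to_subtype
  have : Nonempty (Fin n) := ⟨⟨0, hn⟩⟩
  have : Nonempty (Fin m) := ⟨⟨0, hm⟩⟩
  have hnR : (0 : ℝ) < n := by exact_mod_cast hn
  have hmR : (0 : ℝ) < m := by exact_mod_cast hm
  have hlog : 0 < Real.log (2 / δ) := Real.log_pos (by rw [lt_div_iff₀ hδ0]; linarith)
  -- sample-level class
  let g : F → X × Ysp → ℝ := fun f p => ℓ (f.1 p.1) p.2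
  have hgm : ∀ f, Measurable (g f) := fun f => loss_meas ℓ f.1 (hFmeas _ f.2)
  have hg01 : ∀ f p, g f p ∈ Set.Icc (0 : ℝ) 1 := fun f p => hℓ01 _ _
  -- domain-level class
  let G : F → Measure (X × Ysp) → ℝ := fun f P => max 0 (min 1 (risk ℓ P f.1))
  have hGm : ∀ f, Measurable (G f) := fun f =>
    measurable_const.max (measurable_const.min (risk_meas ℓ hℓ01 f.1 (hFmeas _ f.2)))
  have hG01 : ∀ f P, G f P ∈ Set.Icc (0 : ℝ) 1 := fun f P =>
    ⟨le_max_left _ _, max_le zero_le_one (min_le_left _ _)⟩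
  have hr01 : ∀ f : F, ∀ P : Measure (X × Ysp), IsProbabilityMeasure P →
      risk ℓ P f.1 ∈ Set.Icc (0 : ℝ) 1 := fun f P hP => gint_mem g hgm hg01 P f
  have hGr : ∀ f : F, ∀ P : Measure (X × Ysp), IsProbabilityMeasure P → G f P = risk ℓ P f.1 :=
    fun f P hP => by
      have := hr01 f P hP
      simp only [G]
      rw [min_eq_right this.2, max_eq_right this.1]
  have hGint : ∀ f : F, ∫ P, G f P ∂μ = metaRisk ℓ μ f.1 := fun f => by
    refine integral_congr_ae ?_
    filter_upwards [hμprob] with P hP using hGr f P hP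
  -- bad events
  let bad1 : Set (Fin n → Measure (X × Ysp)) := {P | ∃ f : F,
    (Fintype.card (Fin n) : ℝ)⁻¹ * ∑ k, G f (P k) + 2 * radG G P
        + 3 * √(Real.log (2 / δ) / (2 * Fintype.card (Fin n)))
        < (Fintype.card (Fin n) : ℝ)⁻¹ * ∑ k : Fin n, ∫ a, G f a ∂μ}
  let bad2 : Set ((Fin n → Measure (X × Ysp)) × ((Fin n × Fin m) → X × Ysp)) := {ω | ∃ f : F,
    (Fintype.card (Fin n × Fin m) : ℝ)⁻¹ * ∑ k, g f (ω.2 k) + 2 * radG g ω.2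
        + 3 * √(Real.log (2 / δ) / (2 * Fintype.card (Fin n × Fin m)))
        < (Fintype.card (Fin n × Fin m) : ℝ)⁻¹ * ∑ k : Fin n × Fin m, risk ℓ (ω.1 k.1) f.1}
  let bad0 : Set (Fin n → Measure (X × Ysp)) := {P | ¬ ∀ j, P j Set.univ = 1}
  have hb0 : MeasurableSet bad0 := by
    have hcc : bad0 = {P : Fin n → Measure (X × Ysp) | ∀ j, P j Set.univ = 1}ᶜ := rfl
    rw [hcc]
    refine MeasurableSet.compl ?_
    have : {P : Fin n → Measure (X × Ysp) | ∀ j, P j Set.univ = 1}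
        = ⋂ j, {P | P j Set.univ = 1} := by ext; simp
    rw [this]
    refine MeasurableSet.iInter fun j => ?_
    exact ((Measure.measurable_coe MeasurableSet.univ).comp (measurable_pi_apply j))
      (measurableSet_singleton 1)
  have hb1 : MeasurableSet bad1 := by
    have : bad1 = ⋃ f : F, {P | (Fintype.card (Fin n) : ℝ)⁻¹ * ∑ k, G f (P k) + 2 * radG G P
        + 3 * √(Real.log (2 / δ) / (2 * Fintype.card (Fin n)))
        < (Fintype.card (Fin n) : ℝ)⁻¹ * ∑ k : Fin n, ∫ a, G f a ∂μ} := by ext; simp [bad1]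
    rw [this]
    refine MeasurableSet.iUnion fun f => measurableSet_lt ?_ measurable_const
    refine ((Measurable.const_mul (Finset.measurable_sum _ fun k _ => ?_) _).add
      ((radG_meas G hGm).const_mul 2)).add_const _
    exact (hGm f).comp (measurable_pi_apply k)
  have hb2 : MeasurableSet bad2 := by
    have : bad2 = ⋃ f : F, {ω | (Fintype.card (Fin n × Fin m) : ℝ)⁻¹ * ∑ k, g f (ω.2 k)
        + 2 * radG g ω.2 + 3 * √(Real.log (2 / δ) / (2 * Fintype.card (Fin n × Fin m)))
        < (Fintype.card (Fin n × Fin m) : ℝ)⁻¹ * ∑ k : Fin n × Fin m, risk ℓ (ω.1 k.1) f.1} := by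
      ext; simp [bad2]
    rw [this]
    refine MeasurableSet.iUnion fun f => measurableSet_lt ?_ ?_
    · refine ((Measurable.const_mul (Finset.measurable_sum _ fun k _ => ?_) _).add
        (((radG_meas g hgm).comp measurable_snd).const_mul 2)).add_const _
      exact (hgm f).comp ((measurable_pi_apply k).comp measurable_snd)
    · refine Measurable.const_mul (Finset.measurable_sum _ fun k _ => ?_) _
      exact (risk_meas ℓ hℓ01 f.1 (hFmeas _ f.2)).comp
        ((measurable_pi_apply k.1).comp measurable_fst)
  have hae := ae_all_prob n μ hμprob
  have hmarg : ∀ s : Set (Fin n → Measure (X × Ysp)), MeasurableSet s →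
      jointLaw n m μ (Prod.fst ⁻¹' s) = Measure.pi (fun _ : Fin n => μ) s := by
    intro s hs
    rw [jointLaw_apply n m μ hμprob (measurable_fst hs), ← lintegral_indicator_one hs]
    refine lintegral_congr_ae ?_
    filter_upwards [hae] with P hP
    by_cases h : P ∈ s
    · have : (Prod.mk P ⁻¹' (Prod.fst ⁻¹' s) : Set ((Fin n × Fin m) → X × Ysp)) = Set.univ := by
        ext; simp [h]
      rw [this]; simp [h]
    · have : (Prod.mk P ⁻¹' (Prod.fst ⁻¹' s) : Set ((Fin n × Fin m) → X × Ysp)) = ∅ := by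
        ext; simp [h]
      rw [this]; simp [h]
  have hJ : jointLaw n m μ Set.univ = 1 := by
    have := hmarg Set.univ MeasurableSet.univ
    simpa using this
  have hJ0 : jointLaw n m μ (Prod.fst ⁻¹' bad0) = 0 := by
    rw [hmarg _ hb0]
    have : ∀ᵐ P ∂(Measure.pi fun _ : Fin n => μ), ∀ j, P j Set.univ = 1 := by
      filter_upwards [hae] with P hP j using (hP j).measure_univ
    exact this
  have hJ1 : jointLaw n m μ (Prod.fst ⁻¹' bad1) ≤ ENNReal.ofReal δ := by
    rw [hmarg _ hb1]
    exact rad_bound G (fun _ : Fin n => μ) hGm hG01 δ hδ0 hδ1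
  have hJ2 : jointLaw n m μ bad2 ≤ ENNReal.ofReal δ := by
    rw [jointLaw_apply n m μ hμprob hb2]
    calc ∫⁻ P, (Measure.pi fun p : Fin n × Fin m => P p.1) (Prod.mk P ⁻¹' bad2)
          ∂(Measure.pi fun _ : Fin n => μ)
        ≤ ∫⁻ P, ENNReal.ofReal δ ∂(Measure.pi fun _ : Fin n => μ) := by
          refine lintegral_mono_ae ?_
          filter_upwards [hae] with P hP
          exact rad_bound g (fun p : Fin n × Fin m => P p.1) hgm hg01 δ hδ0 hδ1
      _ = ENNReal.ofReal δ := by simp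
  -- union bound
  refine le_trans ?_ (measure_mono (s := ((Prod.fst ⁻¹' bad0) ∪ (Prod.fst ⁻¹' bad1) ∪ bad2)ᶜ) ?_)
  · have hU : jointLaw n m μ ((Prod.fst ⁻¹' bad0) ∪ (Prod.fst ⁻¹' bad1) ∪ bad2)
        ≤ ENNReal.ofReal (2 * δ) := by
      refine (measure_union_le _ _).trans ?_
      refine (add_le_add ((measure_union_le _ _).trans (add_le_add hJ0.le hJ1)) hJ2).trans ?_
      rw [zero_add, ← ENNReal.ofReal_add hδ0.le hδ0.le, two_mul]
    have h1 : (1 : ENNReal) ≤ jointLaw n m μ ((Prod.fst ⁻¹' bad0) ∪ (Prod.fst ⁻¹' bad1) ∪ bad2)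
        + jointLaw n m μ ((Prod.fst ⁻¹' bad0) ∪ (Prod.fst ⁻¹' bad1) ∪ bad2)ᶜ := by
      rw [← hJ, ← Set.union_compl_self ((Prod.fst ⁻¹' bad0) ∪ (Prod.fst ⁻¹' bad1) ∪ bad2)]
      exact measure_union_le _ _
    rw [ENNReal.ofReal_sub _ (by linarith), ENNReal.ofReal_one, tsub_le_iff_left]
    exact h1.trans (by gcongr)
  · rintro ⟨P, s⟩ hω f hf
    simp only [Set.mem_compl_iff, Set.mem_union, not_or, Set.mem_preimage] at hω
    obtain ⟨⟨h0, h1⟩, h2⟩ := hω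
    have hP : ∀ j, IsProbabilityMeasure (P j) := fun j => ⟨by
      by_contra h
      exact h0 fun h' => h (h' j)⟩
    have e1 : metaRisk ℓ μ f ≤ (n : ℝ)⁻¹ * ∑ j, risk ℓ (P j) f + 2 * radG G P
        + 3 * √(Real.log (2 / δ) / (2 * n)) := by
      by_contra hcon
      refine h1 ⟨⟨f, hf⟩, ?_⟩
      have hs : ∑ k, G ⟨f, hf⟩ (P k) = ∑ j, risk ℓ (P j) f :=
        Finset.sum_congr rfl fun k _ => hGr ⟨f, hf⟩ (P k) (hP k)
      rw [hGint, hs, Finset.sum_const, Finset.card_univ, Fintype.card_fin, nsmul_eq_mul,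
        inv_mul_cancel_left₀ hnR.ne']
      exact not_le.1 hcon
    have e2 : (n : ℝ)⁻¹ * ∑ j, risk ℓ (P j) f
        ≤ ((m : ℝ) * n)⁻¹ * ∑ p : Fin n × Fin m, ℓ (f (s p).1) (s p).2 + 2 * radG g s
          + 3 * √(Real.log (2 / δ) / (2 * m * n)) := by
      by_contra hcon
      refine h2 ⟨⟨f, hf⟩, ?_⟩
      have hs : (Fintype.card (Fin n × Fin m) : ℝ)⁻¹ * ∑ k : Fin n × Fin m, risk ℓ (P k.1) f
          = (n : ℝ)⁻¹ * ∑ j, risk ℓ (P j) f := by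
        rw [Fintype.sum_prod_type]
        simp only [Finset.sum_const, Finset.card_univ, Fintype.card_fin, nsmul_eq_mul,
          Fintype.card_prod, ← Finset.mul_sum]
        push_cast
        field_simp
      have hc : (Fintype.card (Fin n × Fin m) : ℝ) = m * n := by
        simp [mul_comm]
      change _ < (Fintype.card (Fin n × Fin m) : ℝ)⁻¹ * ∑ k : Fin n × Fin m, risk ℓ (P k.1) f
      rw [hs, hc, ← mul_assoc]
      exact not_le.1 hcon
    have e3 : radG g s ≤ rad ℓ F s := by
      unfold radG rad sgnSup
      gcongr with σ _
      exact iSup_subtype_le F (fun f => (Fintype.card (Fin n × Fin m) : ℝ)⁻¹ *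
        ∑ k, sgn (σ k) * ℓ (f (s k).1) (s k).2)
        fun f hf => avg_abs_le _ fun k => sg_abs g hg01 (σ k) ⟨f, hf⟩ (s k)
    have e4 : radG G P ≤ radDom ℓ F P := by
      unfold radG radDom sgnSup
      rw [Fintype.card_fin]
      gcongr with σ _
      have : ∀ i : F, ∀ k, G i (P k) = risk ℓ (P k) i.1 := fun i k => hGr i _ (hP k)
      simp only [this]
      refine iSup_subtype_le F (fun f => (n : ℝ)⁻¹ * ∑ k, sgn (σ k) * risk ℓ (P k) f)
        fun f hf => ?_
      have := avg_abs_le (fun k => sgn (σ k) * risk ℓ (P k) f) fun k => by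
        rw [← hGr ⟨f, hf⟩ _ (hP k)]
        exact sg_abs G hG01 (σ k) ⟨f, hf⟩ (P k)
      rwa [Fintype.card_fin] at this
    have e5 : √(Real.log (2 / δ) / (2 * n)) ≤ √(Real.log (2 / δ) / n) := by
      apply Real.sqrt_le_sqrt
      gcongr
      linarith
    change metaRisk ℓ μ f ≤ ((m : ℝ) * n)⁻¹ * ∑ p : Fin n × Fin m, ℓ (f (s p).1) (s p).2
            + 2 * rad ℓ F s + 2 * radDom ℓ F P
            + 3 * Real.sqrt (Real.log (2 / δ) / (2 * m * n))
            + 3 * Real.sqrt (Real.log (2 / δ) / n)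
    linarith
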